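/- Let ℋ be a separable complex Hilbert space with Hilbert basis (e_i)_{i∈I}, and let H be a subgroup of the invertible bounded operators on ℋ. Suppose there is a constant M < ∞ such that for every h ∈ H, ∑'_i ‖(h − 1) e_i‖² ≤ M² (i.e. h − 1 is Hilbert–Schmidt with ‖h − 1‖₂ ≤ M for all h ∈ H). Then H is unitarizable: there exists an invertible s ∈ B(ℋ) such that s⁻¹ h s is unitary for every h ∈ H. -/

import Mathlib

/-!
A representation `π` acts on operators by `p ↦ π(g)⋆ p π(g)`, and `π` is unitarizable as soon as
this action fixes a strictly positive `p`: conjugate by the square root of `p`. Such a `p` is found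
as the Chebyshev centre of the orbit of `1`. When `‖π(g)⋆ π(g) - 1‖₂` is bounded, the function
`p ↦ sup_{g, h} ‖π(g)⋆ p π(g) - π(h)⋆ π(h)‖₂²` is invariant, lower semicontinuous for the operator
norm and finite at `1`. Since `π` is uniformly bounded, the parallelogram law for the
Hilbert–Schmidt norm survives the supremum as a uniform midpoint inequality, so the function has
exactly one minimizer on the closed convex hull of the orbit. By uniqueness the minimizer is fixed,
and every element of the hull is bounded below by a positive multiple of `1`.
-/

open Filter
open scoped ENNReal NNReal InnerProductSpace Topology

section Minimizer

variable {X : Type*} [PseudoEMetricSpace X] {S : Set X} {F : X → ℝ≥0∞} {c : ℝ≥0}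

theorem mul_edist_sq_le_of_le_add {m δ : ℝ≥0∞} (hm : m ≠ ⊤) (hle : ∀ z ∈ S, m ≤ F z)
    (hmid : ∀ x ∈ S, ∀ y ∈ S, ∃ z ∈ S, F z + c * edist x y ^ 2 ≤ max (F x) (F y))
    {x y : X} (hx : x ∈ S) (hy : y ∈ S) (hFx : F x ≤ m + δ) (hFy : F y ≤ m + δ) :
    c * edist x y ^ 2 ≤ δ := by
  obtain ⟨z, hz, hFz⟩ := hmid x hx y hy
  have h : m + c * edist x y ^ 2 ≤ m + δ :=
    (add_le_add_left (hle z hz) _).trans (hFz.trans (max_le hFx hFy))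
  exact (ENNReal.add_le_add_iff_left hm).1 h

theorem exists_isMinOn_of_midpoint_gap [CompleteSpace X] (hS : IsClosed S)
    (hF : LowerSemicontinuous F) (hc : c ≠ 0)
    (hmid : ∀ x ∈ S, ∀ y ∈ S, ∃ z ∈ S, F z + c * edist x y ^ 2 ≤ max (F x) (F y))
    (hfin : ∃ x ∈ S, F x ≠ ⊤) :
    ∃ p ∈ S, IsMinOn F S p := by
  set m : ℝ≥0∞ := ⨅ x ∈ S, F x with hm_def
  have hle : ∀ z ∈ S, m ≤ F z := fun z hz => iInf₂_le z hz
  have hm : m ≠ ⊤ := by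
    obtain ⟨x, hx, hFx⟩ := hfin
    exact ne_top_of_le_ne_top hFx (hle x hx)
  let δ : ℕ → ℝ≥0∞ := fun n => c * (2⁻¹ ^ n) ^ 2
  have hδ_anti : Antitone δ := fun n k hnk =>
    mul_le_mul_right (pow_le_pow_left' (pow_le_pow_right_of_le_one' (by simp) hnk) 2) _
  have hδ_lim : Tendsto δ atTop (𝓝 0) := by
    have h : Tendsto (fun n => (2⁻¹ ^ n : ℝ≥0∞)) atTop (𝓝 0) :=
      ENNReal.tendsto_pow_atTop_nhds_zero_of_lt_one (by norm_num)
    simpa using ENNReal.Tendsto.const_mul (ENNReal.Tendsto.pow (n := 2) h) (.inr ENNReal.coe_ne_top)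
  have hnear : ∀ n, ∃ x ∈ S, F x < m + δ n := fun n => by
    simpa only [hm_def, iInf_lt_iff, exists_prop] using
      ENNReal.lt_add_right hm (by simp [δ, hc] : δ n ≠ 0)
  choose u huS huF using hnear
  have hu_dist : ∀ n, edist (u n) (u (n + 1)) ≤ 1 * 2⁻¹ ^ n := fun n => by
    have hgap := mul_edist_sq_le_of_le_add hm hle hmid (huS n) (huS (n + 1)) (huF n).le
      ((huF (n + 1)).le.trans (by gcongr; exact hδ_anti n.le_succ))
    rwa [ENNReal.mul_le_mul_iff_right (ENNReal.coe_ne_zero.2 hc) ENNReal.coe_ne_top,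
      ENNReal.pow_le_pow_left_iff two_ne_zero, ← one_mul (2⁻¹ ^ n)] at hgap
  obtain ⟨p, hp⟩ := cauchySeq_tendsto_of_complete
    (cauchySeq_of_edist_le_geometric 2⁻¹ 1 (by norm_num) (by simp) hu_dist)
  have hpS : p ∈ S := hS.mem_of_tendsto hp (.of_forall huS)
  have hFu : Tendsto (F ∘ u) atTop (𝓝 m) :=
    tendsto_of_tendsto_of_tendsto_of_le_of_le tendsto_const_nhds (by simpa using hδ_lim.const_add m)
      (fun n => hle _ (huS n)) (fun n => (huF n).le)
  have hFp : F p ≤ m :=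
    calc F p ≤ liminf F (𝓝 p) := hF.le_liminf p
      _ ≤ liminf (F ∘ u) atTop := liminf_le_liminf_of_le hp
      _ = m := hFu.liminf_eq
  exact ⟨p, hpS, fun z hz => hFp.trans (hle z hz)⟩

theorem existsUnique_isMinOn_of_midpoint_gap {X : Type*} [EMetricSpace X] [CompleteSpace X]
    {S : Set X} {F : X → ℝ≥0∞} {c : ℝ≥0} (hS : IsClosed S) (hF : LowerSemicontinuous F) (hc : c ≠ 0)
    (hmid : ∀ x ∈ S, ∀ y ∈ S, ∃ z ∈ S, F z + c * edist x y ^ 2 ≤ max (F x) (F y))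
    (hfin : ∃ x ∈ S, F x ≠ ⊤) :
    ∃! p, p ∈ S ∧ IsMinOn F S p := by
  obtain ⟨p, hpS, hp⟩ := exists_isMinOn_of_midpoint_gap hS hF hc hmid hfin
  refine ⟨p, ⟨hpS, hp⟩, fun q ⟨hqS, hq⟩ => ?_⟩
  obtain ⟨x, hxS, hFx⟩ := hfin
  have hgap : c * edist q p ^ 2 ≤ 0 :=
    mul_edist_sq_le_of_le_add (ne_top_of_le_ne_top hFx (hp hxS)) hp hmid hqS hpS
      (by simpa using hq hpS) (by simp)
  simpa [hc] using hgap

end Minimizer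

section HilbertSchmidt

variable {𝕜 E F G I J : Type*} [RCLike 𝕜]
  [NormedAddCommGroup E] [InnerProductSpace 𝕜 E]
  [NormedAddCommGroup F] [InnerProductSpace 𝕜 F]
  [NormedAddCommGroup G] [InnerProductSpace 𝕜 G]

theorem tsum_enorm_inner_sq (b : HilbertBasis I 𝕜 E) (v : E) :
    ∑' i, ‖⟪b i, v⟫_𝕜‖ₑ ^ 2 = ‖v‖ₑ ^ 2 := by
  have h : HasSum (fun i => ‖⟪b i, v⟫_𝕜‖ ^ 2) (‖v‖ ^ 2) := by
    simpa only [b.repr_apply_apply, b.repr.norm_map, ENNReal.toReal_ofNat, Real.rpow_two] using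
      lp.hasSum_norm (p := 2) (by norm_num) (b.repr v)
  simp only [← ofReal_norm, ← ENNReal.ofReal_pow (norm_nonneg _)]
  rw [← ENNReal.ofReal_tsum_of_nonneg (fun _ => by positivity) h.summable, h.tsum_eq]

/-- The square `‖T‖₂²` of the Hilbert–Schmidt norm, computed in the Hilbert basis `e` of the
domain; it takes values in `ℝ≥0∞` so as to be defined for every bounded operator. -/
noncomputable def hilbertSchmidtSq (e : HilbertBasis I 𝕜 E) (T : E →L[𝕜] F) : ℝ≥0∞ :=
  ∑' i, ‖T (e i)‖ₑ ^ 2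

theorem hilbertSchmidtSq_adjoint [CompleteSpace E] [CompleteSpace F] (e : HilbertBasis I 𝕜 E)
    (f : HilbertBasis J 𝕜 F) (T : E →L[𝕜] F) :
    hilbertSchmidtSq f T.adjoint = hilbertSchmidtSq e T := by
  simp only [hilbertSchmidtSq, ← tsum_enorm_inner_sq e, ← tsum_enorm_inner_sq f]
  rw [ENNReal.tsum_comm]
  refine tsum_congr fun i => tsum_congr fun j => ?_
  rw [T.adjoint_inner_right, ← inner_conj_symm, RCLike.enorm_conj]

theorem enorm_adjoint_apply_sq_le [CompleteSpace E] [CompleteSpace F] (e : HilbertBasis I 𝕜 E)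
    (T : E →L[𝕜] F) (w : F) :
    ‖T.adjoint w‖ₑ ^ 2 ≤ hilbertSchmidtSq e T * ‖w‖ₑ ^ 2 := by
  rw [← tsum_enorm_inner_sq e, hilbertSchmidtSq, ← ENNReal.tsum_mul_right]
  refine ENNReal.tsum_le_tsum fun i => ?_
  rw [T.adjoint_inner_right, ← mul_pow]
  gcongr
  simp only [enorm_eq_nnnorm]
  exact_mod_cast nnnorm_inner_le_nnnorm (𝕜 := 𝕜) (T (e i)) w

theorem enorm_sq_le_hilbertSchmidtSq [CompleteSpace E] [CompleteSpace F] (e : HilbertBasis I 𝕜 E)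
    (T : E →L[𝕜] F) : ‖T‖ₑ ^ 2 ≤ hilbertSchmidtSq e T := by
  have hsqrt : (hilbertSchmidtSq e T ^ (2⁻¹ : ℝ)) ^ 2 = hilbertSchmidtSq e T := by
    exact_mod_cast ENNReal.rpow_inv_natCast_pow two_ne_zero (hilbertSchmidtSq e T)
  have hadj : ‖T.adjoint‖ₑ ≤ hilbertSchmidtSq e T ^ (2⁻¹ : ℝ) := by
    refine T.adjoint.opENorm_le_bound fun w => ?_
    rw [← ENNReal.pow_le_pow_left_iff two_ne_zero, mul_pow, hsqrt]
    exact enorm_adjoint_apply_sq_le e T w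
  rw [← hsqrt, ← LinearIsometryEquiv.enorm_map ContinuousLinearMap.adjoint T]
  gcongr

theorem hilbertSchmidtSq_comp_le (e : HilbertBasis I 𝕜 E) (S : F →L[𝕜] G) (T : E →L[𝕜] F) :
    hilbertSchmidtSq e (S ∘L T) ≤ ‖S‖ₑ ^ 2 * hilbertSchmidtSq e T := by
  rw [hilbertSchmidtSq, hilbertSchmidtSq, ← ENNReal.tsum_mul_left]
  refine ENNReal.tsum_le_tsum fun i => ?_
  rw [← mul_pow]
  gcongr
  exact S.le_opENorm _

theorem hilbertSchmidtSq_parallelogram (e : HilbertBasis I 𝕜 E) (S T : E →L[𝕜] F) :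
    hilbertSchmidtSq e (S + T) + hilbertSchmidtSq e (S - T) =
      2 * (hilbertSchmidtSq e S + hilbertSchmidtSq e T) := by
  simp only [hilbertSchmidtSq, ← ENNReal.tsum_add, ← ENNReal.tsum_mul_left]
  refine tsum_congr fun i => ?_
  simp only [add_apply, sub_apply, enorm_eq_nnnorm]
  exact_mod_cast parallelogram_law_with_nnnorm 𝕜 (S (e i)) (T (e i))

theorem hilbertSchmidtSq_add_le (e : HilbertBasis I 𝕜 E) (S T : E →L[𝕜] F) :
    hilbertSchmidtSq e (S + T) ≤ 2 * (hilbertSchmidtSq e S + hilbertSchmidtSq e T) :=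
  hilbertSchmidtSq_parallelogram e S T ▸ le_self_add

theorem hilbertSchmidtSq_sub_le (e : HilbertBasis I 𝕜 E) (S T : E →L[𝕜] F) :
    hilbertSchmidtSq e (S - T) ≤ 2 * (hilbertSchmidtSq e S + hilbertSchmidtSq e T) :=
  hilbertSchmidtSq_parallelogram e S T ▸ le_add_self

theorem lowerSemicontinuous_hilbertSchmidtSq (e : HilbertBasis I 𝕜 E) :
    LowerSemicontinuous (hilbertSchmidtSq (F := F) e) :=
  lowerSemicontinuous_tsum fun i => Continuous.lowerSemicontinuous (by fun_prop)

theorem four_mul_hilbertSchmidtSq_add_of_add_self_eq (e : HilbertBasis I 𝕜 E)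
    {R S T : E →L[𝕜] F} (hR : R + R = S + T) :
    4 * hilbertSchmidtSq e R + hilbertSchmidtSq e (S - T) =
      2 * (hilbertSchmidtSq e S + hilbertSchmidtSq e T) := by
  have hRR : hilbertSchmidtSq e (R + R) = 4 * hilbertSchmidtSq e R := by
    have hzero : hilbertSchmidtSq e (R - R) = 0 := by simp [hilbertSchmidtSq]
    rw [← add_zero (hilbertSchmidtSq e (R + R)), ← hzero, hilbertSchmidtSq_parallelogram]
    ring
  rw [← hRR, hR, hilbertSchmidtSq_parallelogram]

theorem hilbertSchmidtSq_le_ofReal (e : HilbertBasis I 𝕜 E) {T : E →L[𝕜] F} {r : ℝ}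
    (hT : Summable fun i => ‖T (e i)‖ ^ 2) (hr : ∑' i, ‖T (e i)‖ ^ 2 ≤ r) :
    hilbertSchmidtSq e T ≤ ENNReal.ofReal r := by
  simp only [hilbertSchmidtSq, ← ofReal_norm, ← ENNReal.ofReal_pow (norm_nonneg _)]
  rw [← ENNReal.ofReal_tsum_of_nonneg (fun _ => by positivity) hT]
  exact ENNReal.ofReal_le_ofReal hr

theorem hilbertSchmidtSq_star_mul_self_sub_one_le [CompleteSpace E] (e : HilbertBasis I 𝕜 E)
    {T : E →L[𝕜] E} {m : ℝ≥0} (hT : hilbertSchmidtSq e (T - 1) ≤ m) :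
    hilbertSchmidtSq e (star T * T - 1) ≤ (2 * (m ^ 2 + 4 * m) : ℝ≥0) := by
  set k := T - 1 with hk
  have hexpand : star T * T - 1 = star k * k + (k + star k) := by
    rw [hk, star_sub, star_one]
    noncomm_ring
  have hstar : hilbertSchmidtSq e (star k) = hilbertSchmidtSq e k := hilbertSchmidtSq_adjoint e e k
  have hmul : hilbertSchmidtSq e (star k * k) ≤ hilbertSchmidtSq e k ^ 2 :=
    calc hilbertSchmidtSq e (star k * k) ≤ ‖star k‖ₑ ^ 2 * hilbertSchmidtSq e k :=
          hilbertSchmidtSq_comp_le e (star k) k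
      _ ≤ hilbertSchmidtSq e (star k) * hilbertSchmidtSq e k := by
          gcongr
          exact enorm_sq_le_hilbertSchmidtSq e (star k)
      _ = hilbertSchmidtSq e k ^ 2 := by rw [hstar, sq]
  calc hilbertSchmidtSq e (star T * T - 1)
      ≤ 2 * (hilbertSchmidtSq e (star k * k) + hilbertSchmidtSq e (k + star k)) :=
        hexpand ▸ hilbertSchmidtSq_add_le e _ _
    _ ≤ 2 * (hilbertSchmidtSq e k ^ 2 + 2 * (hilbertSchmidtSq e k + hilbertSchmidtSq e k)) := by
        gcongr
        exact (hilbertSchmidtSq_add_le e k (star k)).trans_eq (by rw [hstar])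
    _ ≤ 2 * (m ^ 2 + 2 * (m + m)) := by gcongr
    _ = (2 * (m ^ 2 + 4 * m) : ℝ≥0) := by push_cast; ring

theorem nnnorm_sq_le_one_add_sqrt [CompleteSpace E] (e : HilbertBasis I 𝕜 E)
    {T : E →L[𝕜] E} {C : ℝ≥0} (hT : hilbertSchmidtSq e (star T * T - 1) ≤ C) :
    ‖T‖₊ ^ 2 ≤ 1 + NNReal.sqrt C := by
  have hsub : ‖star T * T - 1‖₊ ≤ NNReal.sqrt C := by
    rw [NNReal.le_sqrt_iff_sq_le, ← ENNReal.coe_le_coe, ENNReal.coe_pow]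
    exact (enorm_sq_le_hilbertSchmidtSq e _).trans hT
  have hone : ‖(1 : E →L[𝕜] E)‖₊ ≤ 1 := ContinuousLinearMap.norm_id_le
  calc ‖T‖₊ ^ 2 = ‖1 + (star T * T - 1)‖₊ := by
        rw [add_sub_cancel, sq]
        exact CStarRing.nnnorm_star_mul_self.symm
    _ ≤ 1 + NNReal.sqrt C := (nnnorm_add_le _ _).trans (add_le_add hone hsub)

end HilbertSchmidt

section OrbitHull

variable {A G : Type*} [NormedRing A] [StarRing A] [NormedAlgebra ℝ A] [Monoid G] (π : G →* A)

/-- The closed convex hull of the orbit of `1` under the action `p ↦ π(g)⋆ p π(g)`. -/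
def orbitHull : Set A := closedConvexHull ℝ (Set.range fun g => star (π g) * π g)

theorem one_mem_orbitHull : 1 ∈ orbitHull π :=
  subset_closedConvexHull ⟨1, by simp⟩

variable {π}

theorem conj_mem_orbitHull {p : A} (hp : p ∈ orbitHull π) (k : G) :
    star (π k) * p * π k ∈ orbitHull π := by
  let f : A →L[ℝ] A := ContinuousLinearMap.mulLeftRight ℝ A (star (π k)) (π k)
  have horbit : Set.range (fun g => star (π g) * π g) ⊆ f ⁻¹' orbitHull π := by
    rintro _ ⟨g, rfl⟩
    refine subset_closedConvexHull ⟨g * k, ?_⟩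
    simp only [f, map_mul, star_mul, ContinuousLinearMap.mulLeftRight_apply, mul_assoc]
  exact closedConvexHull_min horbit (convex_closedConvexHull.is_linear_preimage f.isLinear)
    (isClosed_closedConvexHull.preimage f.continuous) hp

end OrbitHull

section CStar

variable {A : Type*} [CStarAlgebra A] [PartialOrder A] [StarOrderedRing A]

theorem exists_unit_conj_mem_unitary_iff {p : A} (hp : IsStrictlyPositive p) :
    ∃ s : Aˣ, ∀ u : Aˣ, ↑s⁻¹ * (u : A) * s ∈ unitary A ↔ star (u : A) * p * u = p := by
  obtain ⟨r, hr⟩ := hp.isUnit_cfcSqrt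
  have hrp : star (r : A) * r = p := by
    rw [hr, (CFC.sqrt_nonneg p).isSelfAdjoint.star_eq, CFC.sqrt_mul_sqrt_self p]
  refine ⟨r⁻¹, fun u => ?_⟩
  have hconj : star (r * u : A) * (r * u) = star (u : A) * p * u := by
    rw [← hrp, star_mul]
    noncomm_ring
  rw [inv_inv, ← Units.val_mul, Units.mul_inv_mem_unitary, Units.ext_iff]
  simp only [Units.val_mul, Units.coe_star, hconj, hrp]

theorem inv_smul_one_le_star_mul_self {a b : A} (hba : b * a = 1) {K : ℝ} (hK : 0 < K)
    (hb : ‖b‖ ^ 2 ≤ K) : K⁻¹ • (1 : A) ≤ star a * a := by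
  rw [inv_smul_le_iff_of_pos hK]
  have hbb : star b * b ≤ K • 1 := by
    rw [← Algebra.algebraMap_eq_smul_one]
    exact CStarAlgebra.star_mul_le_algebraMap_norm_sq.trans (algebraMap_mono A hb)
  calc (1 : A) = star a * (star b * b) * a := by
        rw [← mul_assoc, ← star_mul, hba, star_one, one_mul, hba]
    _ ≤ star a * (K • 1) * a := star_left_conjugate_le_conjugate hbb a
    _ = K • (star a * a) := by rw [mul_smul_comm, mul_one, smul_mul_assoc]

theorem isStrictlyPositive_of_mem_orbitHull {G : Type*} [Group G] {π : G →* A} {K : ℝ} (hK : 0 < K)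
    (hπ : ∀ g, ‖π g‖ ^ 2 ≤ K) {p : A} (hp : p ∈ orbitHull π) : IsStrictlyPositive p := by
  have horbit : Set.range (fun g => star (π g) * π g) ⊆ Set.Ici (K⁻¹ • 1) := by
    rintro _ ⟨g, rfl⟩
    exact inv_smul_one_le_star_mul_self (by rw [← map_mul, inv_mul_cancel, map_one]) hK (hπ g⁻¹)
  have hle : K⁻¹ • 1 ≤ p := closedConvexHull_min horbit (convex_Ici _) isClosed_Ici hp
  exact (IsStrictlyPositive.smul (inv_pos.2 hK) isStrictlyPositive_one).of_le hle

end CStar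

section OrbitRadius

variable {ℋ I G : Type*} [NormedAddCommGroup ℋ] [InnerProductSpace ℂ ℋ] [CompleteSpace ℋ]
  [Group G] (e : HilbertBasis I ℂ ℋ) (π : G →* (ℋ →L[ℂ] ℋ))

/-- The squared radius of the smallest Hilbert–Schmidt ball around `p` containing the orbit of `1`,
made invariant under `p ↦ π(g)⋆ p π(g)` by taking the supremum over the orbit of `p`. -/
noncomputable def orbitRadiusSq (p : ℋ →L[ℂ] ℋ) : ℝ≥0∞ :=
  ⨆ g, ⨆ h, hilbertSchmidtSq e (star (π g) * p * π g - star (π h) * π h)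

theorem orbitRadiusSq_conj (p : ℋ →L[ℂ] ℋ) (k : G) :
    orbitRadiusSq e π (star (π k) * p * π k) = orbitRadiusSq e π p := by
  refine (Equiv.mulLeft k).iSup_congr fun g => ?_
  simp only [Equiv.coe_mulLeft, map_mul, star_mul, mul_assoc]

theorem lowerSemicontinuous_orbitRadiusSq : LowerSemicontinuous (orbitRadiusSq e π) :=
  lowerSemicontinuous_iSup fun g => lowerSemicontinuous_iSup fun h =>
    (lowerSemicontinuous_hilbertSchmidtSq e).comp
      (g := fun p => star (π g) * p * π g - star (π h) * π h) (by fun_prop)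

variable {e π}

theorem orbitRadiusSq_one_ne_top {C : ℝ≥0}
    (hC : ∀ g, hilbertSchmidtSq e (star (π g) * π g - 1) ≤ C) : orbitRadiusSq e π 1 ≠ ⊤ := by
  have hle : orbitRadiusSq e π 1 ≤ 2 * (C + C) := iSup₂_le fun g h =>
    calc hilbertSchmidtSq e (star (π g) * 1 * π g - star (π h) * π h)
        = hilbertSchmidtSq e ((star (π g) * π g - 1) - (star (π h) * π h - 1)) := by
          rw [mul_one, sub_sub_sub_cancel_right]
      _ ≤ 2 * (C + C) := (hilbertSchmidtSq_sub_le e _ _).trans (by gcongr <;> exact hC _)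
  exact ne_top_of_le_ne_top (by finiteness) hle

theorem four_mul_hilbertSchmidtSq_conj_midpoint_add (a q x y : ℋ →L[ℂ] ℋ) :
    4 * hilbertSchmidtSq e (star a * midpoint ℝ x y * a - q) +
        hilbertSchmidtSq e (star a * (x - y) * a) =
      2 * (hilbertSchmidtSq e (star a * x * a - q) + hilbertSchmidtSq e (star a * y * a - q)) := by
  have hsum : (star a * midpoint ℝ x y * a - q) + (star a * midpoint ℝ x y * a - q) =
      (star a * x * a - q) + (star a * y * a - q) :=
    calc (star a * midpoint ℝ x y * a - q) + (star a * midpoint ℝ x y * a - q)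
        = star a * (midpoint ℝ x y + midpoint ℝ x y) * a - (q + q) := by noncomm_ring
      _ = (star a * x * a - q) + (star a * y * a - q) := by
          rw [midpoint_add_self]
          noncomm_ring
  have hsub : (star a * x * a - q) - (star a * y * a - q) = star a * (x - y) * a := by
    noncomm_ring
  rw [← hsub, four_mul_hilbertSchmidtSq_add_of_add_self_eq e hsum]

theorem enorm_sq_le_mul_hilbertSchmidtSq_conj {K : ℝ≥0} (hπ : ∀ g, ‖π g‖₊ ^ 2 ≤ K)
    (d : ℋ →L[ℂ] ℋ) (g : G) :
    ‖d‖ₑ ^ 2 ≤ K ^ 2 * hilbertSchmidtSq e (star (π g) * d * π g) := by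
  set a := star (π g) * d * π g with ha
  have hd : d = star (π g⁻¹) * a * π g⁻¹ := by
    have hinv : π g * π g⁻¹ = 1 := by rw [← map_mul, mul_inv_cancel, map_one]
    calc d = star (π g * π g⁻¹) * d * (π g * π g⁻¹) := by simp [hinv]
      _ = star (π g⁻¹) * a * π g⁻¹ := by rw [ha, star_mul]; simp only [mul_assoc]
  have hnorm : ‖d‖₊ ≤ K * ‖a‖₊ :=
    calc ‖d‖₊ = ‖star (π g⁻¹) * a * π g⁻¹‖₊ := congrArg _ hd
      _ ≤ ‖star (π g⁻¹)‖₊ * ‖a‖₊ * ‖π g⁻¹‖₊ := nnnorm_mul₃_le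
      _ = ‖π g⁻¹‖₊ ^ 2 * ‖a‖₊ := by rw [nnnorm_star]; ring
      _ ≤ K * ‖a‖₊ := by gcongr; exact hπ g⁻¹
  calc ‖d‖ₑ ^ 2 ≤ (K * ‖a‖ₑ) ^ 2 := by gcongr; exact ENNReal.coe_le_coe.2 hnorm
    _ = K ^ 2 * ‖a‖ₑ ^ 2 := mul_pow _ _ _
    _ ≤ K ^ 2 * hilbertSchmidtSq e a := by gcongr; exact enorm_sq_le_hilbertSchmidtSq e a

theorem orbitRadiusSq_midpoint_add_le {K c : ℝ≥0} (hπ : ∀ g, ‖π g‖₊ ^ 2 ≤ K)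
    (hc : 4 * K ^ 2 * c ≤ 1) (x y : ℋ →L[ℂ] ℋ) :
    orbitRadiusSq e π (midpoint ℝ x y) + c * edist x y ^ 2 ≤
      max (orbitRadiusSq e π x) (orbitRadiusSq e π y) := by
  set R := max (orbitRadiusSq e π x) (orbitRadiusSq e π y)
  simp only [orbitRadiusSq, ENNReal.iSup_add]
  refine iSup₂_le fun g h => ?_
  let D : (ℋ →L[ℂ] ℋ) → ℝ≥0∞ := fun p =>
    hilbertSchmidtSq e (star (π g) * p * π g - star (π h) * π h)
  have hD : ∀ p, D p ≤ orbitRadiusSq e π p := fun p => le_iSup₂_of_le g h le_rfl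
  have hDx : D x ≤ R := (hD x).trans (le_max_left _ _)
  have hDy : D y ≤ R := (hD y).trans (le_max_right _ _)
  have hdist := enorm_sq_le_mul_hilbertSchmidtSq_conj (e := e) hπ (x - y) g
  rw [← edist_eq_enorm_sub] at hdist
  set δ := hilbertSchmidtSq e (star (π g) * (x - y) * π g)
  have hcK : (4 * K ^ 2 * c : ℝ≥0∞) ≤ 1 := mod_cast hc
  rw [← ENNReal.mul_le_mul_iff_right (a := 4) (by simp) (by simp)]
  calc 4 * (D (midpoint ℝ x y) + c * edist x y ^ 2)
      ≤ 4 * (D (midpoint ℝ x y) + c * (K ^ 2 * δ)) := by gcongr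
    _ = 4 * D (midpoint ℝ x y) + 4 * K ^ 2 * c * δ := by ring
    _ ≤ 4 * D (midpoint ℝ x y) + 1 * δ := by gcongr
    _ = 2 * (D x + D y) := by rw [one_mul, four_mul_hilbertSchmidtSq_conj_midpoint_add]
    _ ≤ 2 * (R + R) := by gcongr
    _ = 4 * R := by ring

end OrbitRadius

theorem stmt17_general {ℋ : Type*} [NormedAddCommGroup ℋ] [InnerProductSpace ℂ ℋ]
    [CompleteSpace ℋ] {I G : Type*} [Group G] (e : HilbertBasis I ℂ ℋ) (π : G →* (ℋ →L[ℂ] ℋ))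
    (C : ℝ≥0) (hC : ∀ g, hilbertSchmidtSq e (star (π g) * π g - 1) ≤ C) :
    ∃ s : (ℋ →L[ℂ] ℋ)ˣ, ∀ g,
      (↑s⁻¹ : ℋ →L[ℂ] ℋ) * π g * (s : ℋ →L[ℂ] ℋ) ∈ unitary (ℋ →L[ℂ] ℋ) := by
  set K : ℝ≥0 := 1 + NNReal.sqrt C
  have hK : 0 < K := by positivity
  have hπ : ∀ g, ‖π g‖₊ ^ 2 ≤ K := fun g => nnnorm_sq_le_one_add_sqrt e (hC g)
  obtain ⟨p, ⟨hp, hmin⟩, huniq⟩ := existsUnique_isMinOn_of_midpoint_gap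
    (S := orbitHull π) (F := orbitRadiusSq e π) (c := (4 * K ^ 2)⁻¹) isClosed_closedConvexHull
    (lowerSemicontinuous_orbitRadiusSq e π) (by positivity)
    (fun x hx y hy => ⟨midpoint ℝ x y, convex_closedConvexHull.midpoint_mem hx hy,
      orbitRadiusSq_midpoint_add_le hπ (mul_inv_cancel₀ (by positivity)).le x y⟩)
    ⟨1, one_mem_orbitHull π, orbitRadiusSq_one_ne_top hC⟩
  have hfix : ∀ g, star (π g) * p * π g = p := fun g =>
    huniq _ ⟨conj_mem_orbitHull hp g, fun q hq => (orbitRadiusSq_conj e π p g).trans_le (hmin hq)⟩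
  obtain ⟨s, hs⟩ := exists_unit_conj_mem_unitary_iff
    (isStrictlyPositive_of_mem_orbitHull (NNReal.coe_pos.2 hK) (fun g => mod_cast hπ g) hp)
  exact ⟨s, fun g => (hs (π.toHomUnits g)).2 (hfix g)⟩

/-- A group of invertible operators with `‖h - 1‖₂` uniformly bounded is
unitarizable. -/
theorem stmt17 {ℋ : Type*} [NormedAddCommGroup ℋ] [InnerProductSpace ℂ ℋ]
    [CompleteSpace ℋ] [TopologicalSpace.SeparableSpace ℋ]
    {I : Type*} (e : HilbertBasis I ℂ ℋ) (H : Subgroup (ℋ →L[ℂ] ℋ)ˣ)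
    (M : ℝ)
    (hM : ∀ h ∈ H,
      (Summable fun i : I => ‖((h : ℋ →L[ℂ] ℋ) - 1) (e i)‖ ^ 2) ∧
      ∑' i : I, ‖((h : ℋ →L[ℂ] ℋ) - 1) (e i)‖ ^ 2 ≤ M ^ 2) :
    ∃ s : (ℋ →L[ℂ] ℋ)ˣ, ∀ h ∈ H,
      (↑s⁻¹ : ℋ →L[ℂ] ℋ) * (h : ℋ →L[ℂ] ℋ) * (s : ℋ →L[ℂ] ℋ) ∈ unitary (ℋ →L[ℂ] ℋ) := by
  obtain ⟨s, hs⟩ := stmt17_general e ((Units.coeHom _).comp H.subtype) _ fun h =>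
    hilbertSchmidtSq_star_mul_self_sub_one_le e
      (hilbertSchmidtSq_le_ofReal e (hM h h.2).1 (hM h h.2).2)
  exact ⟨s, fun h hh => hs ⟨h, hh⟩⟩
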